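/- arXiv:2006.05227 — 3 statements merged into one kernel-verified Lean document; each statement's English description precedes it below -/
import Mathlib

section
/- For all natural numbers n, k ≥ 1 there exists a constant C > 0, depending only on n and k, with the following property. Let A : Fin n → Fin n → Fin (k+1) → ℝ satisfy A_{ijα} = A_{jiα} for all i, j, α, assume the frame is adapted to the mean curvature, i.e., Σ_i A_{iiα} = 0 for every α ≠ 0 and H := Σ_i A_{ii0} > 0, and write h_{ij} := A_{ij0}, |A|² := Σ_{i,j,α} A_{ijα}², |Â|² := Σ_{i,j,α≠0} A_{ijα}², |h|² := Σ_{i,j} h_{ij}². Define E_{klijα} := Σ_{p,β} [ A_{klβ}A_{ipβ}A_{jpα} + A_{lkβ}A_{jpβ}A_{ipα} − A_{ijβ}A_{kpβ}A_{lpα} − A_{jiβ}A_{lpβ}A_{kpα} + A_{jlβ}A_{ipβ}A_{kpα} + A_{ikβ}A_{jpβ}A_{lpα} + A_{jkβ}A_{ipβ}A_{lpα} + A_{ilβ}A_{jpβ}A_{kpα} − A_{ilβ}A_{kpβ}A_{jpα} − A_{jkβ}A_{lpβ}A_{ipα} − A_{jlβ}A_{kpβ}A_{ipα} − A_{ikβ}A_{lpβ}A_{jpα}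 ] and |E|² := Σ_{k,l,i,j,α} E_{klijα}². Then |E|² ≥ 8·|h|²·tr(h⁴) − 8·tr(h³)² − C·|A|⁵·|Â|, where tr(h^m) denotes the trace of the m-th power of the symmetric matrix h. -/
/-!
Only the component of `E` in one normal direction `ν` is needed. Write `h = A_{··ν}` and
`B = A_{··β}`. In terms of `S = Bh + hB` and `C = Bh - hB`, the summand of `E_{KLIJν}` with normal
index `β` is

`B_{KL} S_{IJ} - S_{KL} B_{IJ} - (C_{KI} B_{LJ} + B_{KI} C_{LJ} + C_{LI} B_{KJ} + B_{LI} C_{KJ})`,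

so its norm is at most `12 |B|² |h|`. For `β = ν` the commutator vanishes, and what is left is
`F = 2 (h ⊗ h² - h² ⊗ h)`, whose squared norm is `8 |h|² tr(h⁴) - 8 tr(h³)²` by Lagrange's
identity. The summands with `β ≠ ν` add up to a remainder `R` of norm at most `12 |Â|² |h|`, and
`|F + R|² ≥ |F|² - 2 |F| |R|` gives the estimate, with an error `288 |h|⁴ |Â|²` that is quadratic
in `Â` and has a constant independent of the dimensions.
-/

open Matrix
open scoped Kronecker

theorem norm_sq_sub_two_mul_le_norm_add_sq {V : Type*} [SeminormedAddGroup V] (x y : V) :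
    ‖x‖ ^ 2 - 2 * ‖x‖ * ‖y‖ ≤ ‖x + y‖ ^ 2 := by
  have triangle : ‖x‖ ≤ ‖x + y‖ + ‖y‖ := norm_le_add_norm_add x y
  rcases le_total ‖x‖ ‖y‖ with hxy | hxy
  · nlinarith [norm_nonneg x, sq_nonneg ‖x + y‖]
  · nlinarith [pow_le_pow_left₀ (sub_nonneg.2 hxy) (sub_le_iff_le_add.2 triangle) 2,
      sq_nonneg ‖y‖]

theorem sq_mul_le_sqrt_pow_five_mul_sqrt {x y z : ℝ} (hx : 0 ≤ x) (hy : 0 ≤ y) (hxz : x ≤ z)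
    (hyz : y ≤ z) : x ^ 2 * y ≤ √z ^ 5 * √y :=
  calc x ^ 2 * y ≤ z ^ 2 * (√y * √y) := by rw [Real.mul_self_sqrt hy]; gcongr
    _ = √z ^ 4 * (√y * √y) := by rw [pow_mul √z 2 2, Real.sq_sqrt (hx.trans hxz)]
    _ ≤ √z ^ 4 * (√z * √y) := by gcongr
    _ = √z ^ 5 * √y := by ring

/-- The exterior product `u ∧ v`, encoded as the antisymmetric matrix `u ⊗ v - v ⊗ u`; the leading
term of the error tensor is `2 h ∧ h²`. -/
def wedge {n : Type*} (u v : n → ℝ) : Matrix n n ℝ := vecMulVec u v - vecMulVec v u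

theorem wedge_smul {n : Type*} (u v : n → ℝ) (c : ℝ) : wedge u (c • v) = c • wedge u v := by
  rw [wedge, wedge, vecMulVec_smul, smul_vecMulVec, smul_sub]

/-- The sum of the four tensors obtained from `X_{KI} Y_{LJ}` by exchanging `X` and `Y` and by
exchanging `K` and `L`; with `Y` a commutator, these are the terms of the error tensor that mix the
index pairs. The row index is `(K, L)` and the column index is `(I, J)`. -/
def symKronecker {n : Type*} (X Y : Matrix n n ℝ) : Matrix (n × n) (n × n) ℝ :=
  X ⊗ₖ Y + Y ⊗ₖ X + (X ⊗ₖ Y + Y ⊗ₖ X).submatrix Prod.swap id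

theorem symKronecker_zero_right {n : Type*} (X : Matrix n n ℝ) : symKronecker X 0 = 0 := by
  simp [symKronecker]

/-- The contribution of a normal direction with second fundamental form `B` to the component of the
error tensor `E_{KLIJ}` in a normal direction with second fundamental form `h`. The row index is
`(K, L)` and the column index is `(I, J)`; as `vec` lists entries by columns and the commutator is
antisymmetric only for symmetric `B` and `h`, this reading presupposes symmetry of both. -/
def simonsContribution {n : Type*} [Fintype n] (B h : Matrix n n ℝ) : Matrix (n × n) (n × n) ℝ :=
  wedge (vec B) (vec (B * h + h * B)) - symKronecker B (B * h - h * B)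

theorem simonsContribution_self {n : Type*} [Fintype n] (h : Matrix n n ℝ) :
    simonsContribution h h = (2 : ℝ) • wedge (vec h) (vec (h * h)) := by
  rw [simonsContribution, sub_self, symKronecker_zero_right, sub_zero, ← two_smul ℝ (h * h),
    vec_smul, wedge_smul]

/-- The error tensor `E_{KLIJα}` of the symmetrized Simons identity for the second fundamental form
`A`, whose last index is the normal one. -/
def simonsError {ι κ : Type*} [Fintype ι] [Fintype κ] (A : ι → ι → κ → ℝ) (K L I J : ι) (α : κ) :
    ℝ :=
  ∑ p, ∑ β,
    (A K L β * A I p β * A J p α + A L K β * A J p β * A I p α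
      - A I J β * A K p β * A L p α - A J I β * A L p β * A K p α
      + A J L β * A I p β * A K p α + A I K β * A J p β * A L p α
      + A J K β * A I p β * A L p α + A I L β * A J p β * A K p α
      - A I L β * A K p β * A J p α - A J K β * A L p β * A I p α
      - A J L β * A K p β * A I p α - A I K β * A L p β * A J p α)

theorem simonsError_eq_sum_simonsContribution {ι κ : Type*} [Fintype ι] [Fintype κ]
    {A : ι → ι → κ → ℝ} (hA : ∀ i j α, A i j α = A j i α) (K L I J : ι) (α : κ) :
    simonsError A K L I J α =
      ∑ β, simonsContribution (of fun i j => A i j β) (of fun i j => A i j α) (K, L) (I, J) := by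
  rw [simonsError, Finset.sum_comm]
  refine Finset.sum_congr rfl fun β _ => ?_
  simp only [simonsContribution, wedge, symKronecker, Matrix.sub_apply, Matrix.add_apply,
    vecMulVec_apply, vec, submatrix_apply, kronecker_apply, Prod.swap, id, mul_apply, of_apply,
    Finset.mul_sum, Finset.sum_mul, mul_add, mul_sub, add_mul, sub_mul,
    ← Finset.sum_add_distrib, ← Finset.sum_sub_distrib]
  refine Finset.sum_congr rfl fun p _ => ?_
  rw [hA L K, hA J I, hA J L, hA I K, hA J K, hA I L]
  simp only [hA p]
  ring

section Frobenius

open scoped Matrix.Norms.Frobenius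

variable {l m n p : Type*} [Fintype l] [Fintype m] [Fintype n] [Fintype p]

theorem frobenius_norm_sq {α : Type*} [SeminormedAddCommGroup α] (X : Matrix m n α) :
    ‖X‖ ^ 2 = ∑ i, ∑ j, ‖X i j‖ ^ 2 := by
  rw [frobenius_norm_def, ← Real.sqrt_eq_rpow, Real.sq_sqrt (by positivity)]
  simp only [Real.rpow_two]

theorem frobenius_norm_submatrix_equiv {α : Type*} [SeminormedAddCommGroup α] (X : Matrix m n α)
    (e : l ≃ m) (f : p ≃ n) : ‖X.submatrix e f‖ = ‖X‖ := by
  rw [← sq_eq_sq₀ (norm_nonneg _) (norm_nonneg _), frobenius_norm_sq, frobenius_norm_sq,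
    ← e.sum_comp]
  exact Finset.sum_congr rfl fun i _ => f.sum_comp fun j => ‖X (e i) j‖ ^ 2

theorem frobenius_norm_kronecker {α : Type*} [NonUnitalSeminormedRing α] [NormMulClass α]
    (X : Matrix l m α) (Y : Matrix n p α) : ‖X ⊗ₖ Y‖ = ‖X‖ * ‖Y‖ := by
  rw [← sq_eq_sq₀ (by positivity) (by positivity), mul_pow]
  simp only [frobenius_norm_sq, Fintype.sum_prod_type, kronecker_apply, norm_mul, mul_pow,
    ← Finset.mul_sum, ← Finset.sum_mul]

theorem frobenius_norm_sq_eq_vec_dotProduct_vec (X : Matrix m n ℝ) :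
    ‖X‖ ^ 2 = vec X ⬝ᵥ vec X := by
  simp only [frobenius_norm_sq, dotProduct, Fintype.sum_prod_type_right, vec, Real.norm_eq_abs,
    sq_abs, ← sq]

theorem frobenius_norm_wedge_sq (u v : n → ℝ) :
    ‖wedge u v‖ ^ 2 = 2 * ((u ⬝ᵥ u) * (v ⬝ᵥ v) - (u ⬝ᵥ v) ^ 2) := by
  have expand (i j : n) : ‖wedge u v i j‖ ^ 2 =
      u i * u i * (v j * v j) + v i * v i * (u j * u j) - 2 * (u i * v i * (u j * v j)) := by
    rw [Real.norm_eq_abs, sq_abs, wedge, Matrix.sub_apply, vecMulVec_apply, vecMulVec_apply]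
    ring
  simp only [frobenius_norm_sq, expand, Finset.sum_add_distrib, Finset.sum_sub_distrib,
    ← Finset.mul_sum, ← Finset.sum_mul, dotProduct]
  ring

theorem frobenius_norm_wedge_vec_le (X Y : Matrix m n ℝ) :
    ‖wedge (vec X) (vec Y)‖ ≤ 2 * ‖X‖ * ‖Y‖ := by
  refine (sq_le_sq₀ (norm_nonneg _) (by positivity)).1 ?_
  rw [frobenius_norm_wedge_sq, ← frobenius_norm_sq_eq_vec_dotProduct_vec,
    ← frobenius_norm_sq_eq_vec_dotProduct_vec]
  nlinarith [sq_nonneg (vec X ⬝ᵥ vec Y), sq_nonneg (‖X‖ * ‖Y‖)]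

theorem frobenius_norm_symKronecker_le (X Y : Matrix n n ℝ) :
    ‖symKronecker X Y‖ ≤ 4 * ‖X‖ * ‖Y‖ := by
  have unswapped : ‖X ⊗ₖ Y + Y ⊗ₖ X‖ ≤ 2 * ‖X‖ * ‖Y‖ := by
    refine (norm_add_le _ _).trans_eq ?_
    rw [frobenius_norm_kronecker, frobenius_norm_kronecker]
    ring
  have swap_eq : ‖(X ⊗ₖ Y + Y ⊗ₖ X).submatrix Prod.swap id‖ = ‖X ⊗ₖ Y + Y ⊗ₖ X‖ :=
    frobenius_norm_submatrix_equiv _ (Equiv.prodComm n n) (Equiv.refl _)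
  calc ‖symKronecker X Y‖ ≤ ‖X ⊗ₖ Y + Y ⊗ₖ X‖ + ‖X ⊗ₖ Y + Y ⊗ₖ X‖ :=
        (norm_add_le _ _).trans_eq (by rw [swap_eq])
    _ ≤ 4 * ‖X‖ * ‖Y‖ := by linarith

theorem frobenius_norm_simonsContribution_le (B h : Matrix n n ℝ) :
    ‖simonsContribution B h‖ ≤ 12 * ‖B‖ ^ 2 * ‖h‖ := by
  have product_le : ‖B * h‖ + ‖h * B‖ ≤ 2 * ‖B‖ * ‖h‖ := by
    linarith [frobenius_norm_mul B h, frobenius_norm_mul h B, mul_comm ‖h‖ ‖B‖]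
  calc ‖simonsContribution B h‖
      ≤ ‖wedge (vec B) (vec (B * h + h * B))‖ + ‖symKronecker B (B * h - h * B)‖ :=
        norm_sub_le _ _
    _ ≤ 2 * ‖B‖ * ‖B * h + h * B‖ + 4 * ‖B‖ * ‖B * h - h * B‖ :=
        add_le_add (frobenius_norm_wedge_vec_le _ _) (frobenius_norm_symKronecker_le _ _)
    _ ≤ 2 * ‖B‖ * (2 * ‖B‖ * ‖h‖) + 4 * ‖B‖ * (2 * ‖B‖ * ‖h‖) := by
        gcongr
        · exact (norm_add_le _ _).trans product_le
        · exact (norm_sub_le _ _).trans product_le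
    _ = 12 * ‖B‖ ^ 2 * ‖h‖ := by ring

theorem frobenius_norm_simonsContribution_self_sq [DecidableEq n] {h : Matrix n n ℝ}
    (hh : h.IsSymm) :
    ‖simonsContribution h h‖ ^ 2 = 8 * ‖h‖ ^ 2 * (h ^ 4).trace - 8 * (h ^ 3).trace ^ 2 := by
  have trace_four : vec (h * h) ⬝ᵥ vec (h * h) = (h ^ 4).trace := by
    rw [vec_dotProduct_vec, transpose_mul, hh.eq, ← pow_two, ← pow_two, ← pow_mul]
  have trace_three : vec h ⬝ᵥ vec (h * h) = (h ^ 3).trace := by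
    rw [vec_dotProduct_vec, hh.eq, ← pow_two, ← pow_succ']
  rw [simonsContribution_self, norm_smul, mul_pow, frobenius_norm_wedge_sq, trace_four,
    trace_three, ← frobenius_norm_sq_eq_vec_dotProduct_vec, Real.norm_eq_abs, sq_abs]
  ring

theorem le_frobenius_norm_simonsContribution_add_sum_sq [DecidableEq n] {κ : Type*}
    {h : Matrix n n ℝ} (hh : h.IsSymm) (B : κ → Matrix n n ℝ) (s : Finset κ) :
    8 * ‖h‖ ^ 2 * (h ^ 4).trace - 8 * (h ^ 3).trace ^ 2
        - 288 * (‖h‖ ^ 2) ^ 2 * ∑ β ∈ s, ‖B β‖ ^ 2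
      ≤ ‖simonsContribution h h + ∑ β ∈ s, simonsContribution (B β) h‖ ^ 2 := by
  have remainder_le : ‖∑ β ∈ s, simonsContribution (B β) h‖ ≤ 12 * ‖h‖ * ∑ β ∈ s, ‖B β‖ ^ 2 := by
    refine (norm_sum_le_of_le s fun β _ => frobenius_norm_simonsContribution_le (B β) h).trans_eq ?_
    rw [← Finset.sum_mul, ← Finset.mul_sum]
    ring
  calc _ = ‖simonsContribution h h‖ ^ 2
          - 2 * (12 * ‖h‖ ^ 2 * ‖h‖) * (12 * ‖h‖ * ∑ β ∈ s, ‖B β‖ ^ 2) := by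
        rw [frobenius_norm_simonsContribution_self_sq hh]
        ring
    _ ≤ ‖simonsContribution h h‖ ^ 2
          - 2 * ‖simonsContribution h h‖ * ‖∑ β ∈ s, simonsContribution (B β) h‖ := by
        gcongr
        exact frobenius_norm_simonsContribution_le h h
    _ ≤ _ := norm_sq_sub_two_mul_le_norm_add_sq _ _

theorem sum_simonsError_sq_eq_frobenius_norm_sq {κ : Type*} [Fintype κ] {A : n → n → κ → ℝ}
    (hA : ∀ i j α, A i j α = A j i α) (α : κ) :
    ∑ K, ∑ L, ∑ I, ∑ J, simonsError A K L I J α ^ 2 =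
      ‖∑ β, simonsContribution (of fun i j => A i j β) (of fun i j => A i j α)‖ ^ 2 := by
  simp only [frobenius_norm_sq, Fintype.sum_prod_type, Matrix.sum_apply, Real.norm_eq_abs, sq_abs,
    simonsError_eq_sum_simonsContribution hA]

theorem simons_error_tensor_lower_bound_general {ι κ : Type*} [Fintype ι] [DecidableEq ι]
    [Fintype κ] [DecidableEq κ] (A : ι → ι → κ → ℝ) (hA : ∀ i j α, A i j α = A j i α) (ν : κ) :
    let h : Matrix ι ι ℝ := of fun i j => A i j ν
    8 * (∑ i, ∑ j, A i j ν ^ 2) * (h ^ 4).trace - 8 * (h ^ 3).trace ^ 2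
        - 288 * (∑ i, ∑ j, A i j ν ^ 2) ^ 2 *
          ∑ i, ∑ j, ∑ α ∈ Finset.univ.filter (· ≠ ν), A i j α ^ 2
      ≤ ∑ K, ∑ L, ∑ I, ∑ J, ∑ α, simonsError A K L I J α ^ 2 := by
  intro h
  let B (β : κ) : Matrix ι ι ℝ := of fun i j => A i j β
  have norm_sq_B (β : κ) : ‖B β‖ ^ 2 = ∑ i, ∑ j, A i j β ^ 2 := by
    simp only [frobenius_norm_sq, B, of_apply, Real.norm_eq_abs, sq_abs]
  have norm_sq_hat : ∑ β ∈ Finset.univ.filter (· ≠ ν), ‖B β‖ ^ 2 =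
      ∑ i, ∑ j, ∑ α ∈ Finset.univ.filter (· ≠ ν), A i j α ^ 2 := by
    simp only [norm_sq_B]
    exact Finset.sum_comm_cycle.symm
  have split_normal : simonsContribution h h
      + ∑ β ∈ Finset.univ.filter (· ≠ ν), simonsContribution (B β) h =
        ∑ β, simonsContribution (B β) h := by
    rw [Finset.filter_ne']
    exact Finset.add_sum_erase _ (fun β => simonsContribution (B β) h) (Finset.mem_univ ν)
  have hh : h.IsSymm := IsSymm.ext fun i j => hA j i ν
  rw [← norm_sq_hat, ← norm_sq_B]
  calc _ ≤ ‖∑ β, simonsContribution (B β) h‖ ^ 2 :=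
        split_normal ▸ le_frobenius_norm_simonsContribution_add_sum_sq hh B _
    _ = ∑ K, ∑ L, ∑ I, ∑ J, simonsError A K L I J ν ^ 2 :=
        (sum_simonsError_sq_eq_frobenius_norm_sq hA ν).symm
    _ ≤ _ := by
        gcongr with K _ L _ I _ J
        exact Finset.single_le_sum (f := fun α => simonsError A K L I J α ^ 2)
          (fun _ _ => sq_nonneg _) (Finset.mem_univ ν)

end Frobenius

theorem sq_sum_sq_mul_sum_sq_le {ι κ : Type*} [Fintype ι] [Fintype κ] (A : ι → ι → κ → ℝ) (ν : κ)
    (s : Finset κ) :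
    (∑ i, ∑ j, A i j ν ^ 2) ^ 2 * ∑ i, ∑ j, ∑ α ∈ s, A i j α ^ 2 ≤
      √(∑ i, ∑ j, ∑ α, A i j α ^ 2) ^ 5 * √(∑ i, ∑ j, ∑ α ∈ s, A i j α ^ 2) := by
  refine sq_mul_le_sqrt_pow_five_mul_sqrt (by positivity) (by positivity) ?_ ?_
  · gcongr with i _ j
    exact Finset.single_le_sum (f := fun α => A i j α ^ 2) (fun _ _ => sq_nonneg _)
      (Finset.mem_univ ν)
  · gcongr
    exact Finset.subset_univ s

/-- Key lemma of Section 3: there is `C = C(n,k) > 0` such that for the second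
fundamental form `A` (in an adapted frame: `Σ_i A_{iiα} = 0` for `α ≠ 0` and
`H = Σ_i A_{ii0} > 0`), the cubic error tensor `E` of the symmetrized Simons identity
satisfies `|E|² ≥ 8|h|²·tr(h⁴) − 8·tr(h³)² − C·|A|⁵·|Â|`. -/
theorem simons_error_tensor_lower_bound (n k : ℕ) (hn : 1 ≤ n) (hk : 1 ≤ k) :
    ∃ C : ℝ, 0 < C ∧
      ∀ A : Fin n → Fin n → Fin (k + 1) → ℝ,
        (∀ i j α, A i j α = A j i α) →
        (∀ α : Fin (k + 1), α ≠ 0 → (∑ i, A i i α) = 0) →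
        0 < ∑ i, A i i 0 →
        let h : Matrix (Fin n) (Fin n) ℝ := Matrix.of fun i j => A i j 0
        let E : Fin n → Fin n → Fin n → Fin n → Fin (k + 1) → ℝ :=
          fun K L I J α =>
            ∑ p, ∑ β,
              (A K L β * A I p β * A J p α + A L K β * A J p β * A I p α
                - A I J β * A K p β * A L p α - A J I β * A L p β * A K p α
                + A J L β * A I p β * A K p α + A I K β * A J p β * A L p α
                + A J K β * A I p β * A L p α + A I L β * A J p β * A K p α
                - A I L β * A K p β * A J p α - A J K β * A L p β * A I p α
                - A J L β * A K p β * A I p α - A I K β * A L p β * A J p α)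
        (∑ K, ∑ L, ∑ I, ∑ J, ∑ α, (E K L I J α) ^ 2) ≥
          8 * (∑ i, ∑ j, (A i j 0) ^ 2) * (h ^ 4).trace - 8 * ((h ^ 3).trace) ^ 2
            - C * Real.sqrt (∑ i, ∑ j, ∑ α, (A i j α) ^ 2) ^ 5
              * Real.sqrt
                  (∑ i, ∑ j, ∑ α ∈ Finset.univ.filter (· ≠ (0 : Fin (k + 1))),
                    (A i j α) ^ 2) := by
  refine ⟨288, by norm_num, fun A hA _ _ =>
    (simons_error_tensor_lower_bound_general A hA 0).trans' ?_⟩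
  linarith [sq_sum_sq_mul_sum_sq_le A 0 (Finset.univ.filter (· ≠ 0))]
end

section
/- For every natural number n ≥ 2 and all real numbers ε₀, ε, Λ > 0 with ε₀ < 4/(3n), there exists a constant C > 0, depending only on n, ε₀, ε, Λ, with the following property. Let h be a real symmetric n×n matrix with eigenvalues λ_1 ≤ … ≤ λ_n and H := λ_1 + … + λ_n, let â ≥ 0 be a real number, and set |h|² := tr(h²), |A|² := |h|² + â². Assume H > 0, |A|² ≤ (4/(3n) − ε₀)·H², and λ_1 < −ε·w + Λ·v, where w := ((4/(3n) − ε₀/2)·H² − |A|²)^{1/2} and v := â²/H. Then tr(h²)·tr(h⁴) − tr(h³)² ≥ C⁻¹·|h|²·|A|⁴ − C·|A|⁵·â. -/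
/-!
By Lagrange's identity for the vectors `(λ_i)` and `(λ_i²)`, the quantity `tr(h²) tr(h⁴) − tr(h³)²`
is nonnegative and dominates `λ_i² λ_j² (λ_j − λ_i)²` for every pair of eigenvalues.
Let `C ≥ 1` be large.

* If `|A| ≤ C â`, then `C⁻¹ |h|² |A|⁴ ≤ |A|⁶ ≤ C |A|⁵ â`, and nonnegativity suffices.
* Otherwise `â` is a small multiple of `H`, so that `Λ v` is at most half of the lower bound
  `ε w ≥ ε √(ε₀/2) H` given by the pinching. Hence `λ_1 ≤ −c H` with `c = ε √(ε₀/2) / 2`, while some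
  eigenvalue is at least the mean `H / n`. This pair contributes at least a constant times
  `H⁶`, which dominates `|A|⁶` by the pinching.
-/

open Finset
open scoped BigOperators

section LagrangeIdentity

variable {ι R : Type*} [CommRing R]

lemma two_mul_sum_sq_mul_sum_sq_sub_sq_sum_mul (s : Finset ι) (f g : ι → R) :
    2 * ((∑ i ∈ s, f i ^ 2) * (∑ i ∈ s, g i ^ 2) - (∑ i ∈ s, f i * g i) ^ 2)
      = ∑ i ∈ s, ∑ j ∈ s, (f i * g j - f j * g i) ^ 2 := by
  have expand (i j : ι) : (f i * g j - f j * g i) ^ 2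
      = f i ^ 2 * g j ^ 2 + g i ^ 2 * f j ^ 2 - 2 * ((f i * g i) * (f j * g j)) := by ring
  simp only [expand, sum_sub_distrib, sum_add_distrib, ← mul_sum, ← sum_mul]
  ring

lemma sq_sub_le_sum_sq_mul_sum_sq_sub_sq_sum_mul [LinearOrder R] [IsStrictOrderedRing R]
    (s : Finset ι) (f g : ι → R) {i j : ι} (hi : i ∈ s) (hj : j ∈ s) :
    (f i * g j - f j * g i) ^ 2
      ≤ (∑ i ∈ s, f i ^ 2) * (∑ i ∈ s, g i ^ 2) - (∑ i ∈ s, f i * g i) ^ 2 := by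
  obtain rfl | hij := eq_or_ne i j
  · simpa using sum_mul_sq_le_sq_mul_sq s f g
  refine le_of_mul_le_mul_left ?_ (two_pos : (0 : R) < 2)
  rw [two_mul_sum_sq_mul_sum_sq_sub_sq_sum_mul, ← sum_product']
  calc 2 * (f i * g j - f j * g i) ^ 2
      = (f i * g j - f j * g i) ^ 2 + (f j * g i - f i * g j) ^ 2 := by ring
    _ ≤ ∑ p ∈ s ×ˢ s, (f p.1 * g p.2 - f p.2 * g p.1) ^ 2 :=
      add_le_sum (f := fun p : ι × ι ↦ (f p.1 * g p.2 - f p.2 * g p.1) ^ 2)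
        (fun _ _ ↦ sq_nonneg _) (mk_mem_product hi hj) (mk_mem_product hj hi)
        (fun h ↦ hij (congrArg Prod.fst h))

lemma sq_mul_sub_le_sum_pow_sub [LinearOrder R] [IsStrictOrderedRing R] {s : Finset ι}
    (x : ι → R) {i j : ι} (hi : i ∈ s) (hj : j ∈ s) :
    (x i * x j * (x j - x i)) ^ 2
      ≤ (∑ i ∈ s, x i ^ 2) * (∑ i ∈ s, x i ^ 4) - (∑ i ∈ s, x i ^ 3) ^ 2 := by
  have factor : x i * x j * (x j - x i) = x i * x j ^ 2 - x j * x i ^ 2 := by ring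
  have cube (a : R) : a * a ^ 2 = a ^ 3 := by ring
  have fourth_power (a : R) : (a ^ 2) ^ 2 = a ^ 4 := by ring
  have cross := sq_sub_le_sum_sq_mul_sum_sq_sub_sq_sum_mul s x (fun i ↦ x i ^ 2) hi hj
  simp only [cube, fourth_power] at cross
  rwa [factor]

end LagrangeIdentity

section PowerSums

variable {ι K : Type*} [Field K] [LinearOrder K] [IsStrictOrderedRing K]
  {s : Finset ι} {x : ι → K} {i : ι} {c : K}

lemma mul_sum_pow_six_le_of_le_neg_mul_sum (hi : i ∈ s) (hc : 0 ≤ c) (hsum : 0 ≤ ∑ i ∈ s, x i)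
    (hneg : x i ≤ -(c * ∑ i ∈ s, x i)) :
    c ^ 2 / (#s : K) ^ 4 * (∑ i ∈ s, x i) ^ 6
      ≤ (∑ i ∈ s, x i ^ 2) * (∑ i ∈ s, x i ^ 4) - (∑ i ∈ s, x i ^ 3) ^ 2 := by
  obtain ⟨j, hj, hmean⟩ : ∃ j ∈ s, 𝔼 i ∈ s, x i ≤ x j := exists_le_of_le_expect ⟨i, hi⟩ le_rfl
  rw [expect_eq_sum_div_card] at hmean
  set H := ∑ i ∈ s, x i
  have hcH : 0 ≤ c * H := by positivity
  have hmean_nonneg : 0 ≤ H / #s := by positivity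
  have hi_neg : c * H ≤ -x i := le_neg_of_le_neg hneg
  have hi_nonneg : 0 ≤ -x i := hcH.trans hi_neg
  have hprod : 0 ≤ -x i * x j := mul_nonneg hi_nonneg (hmean_nonneg.trans hmean)
  have hgap : H / #s ≤ x j - x i := by linarith
  calc c ^ 2 / (#s : K) ^ 4 * H ^ 6 = (c * H * (H / #s) * (H / #s)) ^ 2 := by ring
    _ ≤ (-x i * x j * (x j - x i)) ^ 2 := by gcongr
    _ = (x i * x j * (x j - x i)) ^ 2 := by ring
    _ ≤ _ := sq_mul_sub_le_sum_pow_sub x hi hj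

lemma inv_mul_sum_sq_mul_sq_le_of_le_neg_mul_sum {κ C Q : K} (hi : i ∈ s) (hc : 0 ≤ c)
    (hC : 0 < C) (hκC : κ ^ 3 * (#s : K) ^ 4 ≤ C * c ^ 2) (hsum : 0 ≤ ∑ i ∈ s, x i)
    (hneg : x i ≤ -(c * ∑ i ∈ s, x i)) (hQ : ∑ i ∈ s, x i ^ 2 ≤ Q)
    (hpinch : Q ≤ κ * (∑ i ∈ s, x i) ^ 2) :
    C⁻¹ * (∑ i ∈ s, x i ^ 2) * Q ^ 2
      ≤ (∑ i ∈ s, x i ^ 2) * (∑ i ∈ s, x i ^ 4) - (∑ i ∈ s, x i ^ 3) ^ 2 := by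
  have hQ0 : 0 ≤ Q := (sum_nonneg fun _ _ ↦ sq_nonneg _).trans hQ
  have hcard : 0 < (#s : K) := Nat.cast_pos.2 (card_pos.2 ⟨i, hi⟩)
  have hconst : C⁻¹ * κ ^ 3 ≤ c ^ 2 / (#s : K) ^ 4 := by
    rwa [inv_mul_le_iff₀ hC, ← mul_div_assoc, le_div_iff₀ (by positivity)]
  calc C⁻¹ * (∑ i ∈ s, x i ^ 2) * Q ^ 2
      ≤ C⁻¹ * Q * Q ^ 2 := by gcongr
    _ = C⁻¹ * Q ^ 3 := by ring
    _ ≤ C⁻¹ * (κ * (∑ i ∈ s, x i) ^ 2) ^ 3 := by gcongr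
    _ = C⁻¹ * κ ^ 3 * (∑ i ∈ s, x i) ^ 6 := by ring
    _ ≤ c ^ 2 / (#s : K) ^ 4 * (∑ i ∈ s, x i) ^ 6 := by gcongr
    _ ≤ _ := mul_sum_pow_six_le_of_le_neg_mul_sum hi hc hsum hneg

end PowerSums

section ScalarEstimates

variable {C S Q a : ℝ}

lemma inv_mul_mul_sq_le_of_sqrt_le_mul (hC : 1 ≤ C) (hQ : 0 ≤ Q) (hSQ : S ≤ Q)
    (ha : √Q ≤ C * a) : C⁻¹ * S * Q ^ 2 ≤ C * (Q ^ 2 * √Q) * a :=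
  calc C⁻¹ * S * Q ^ 2
      ≤ C⁻¹ * Q * Q ^ 2 := by gcongr
    _ ≤ 1 * Q * Q ^ 2 := by gcongr; exact inv_le_one_of_one_le₀ hC
    _ = Q ^ 2 * √Q * √Q := by rw [one_mul, mul_assoc, Real.mul_self_sqrt hQ, mul_comm]
    _ ≤ Q ^ 2 * √Q * (C * a) := by gcongr
    _ = C * (Q ^ 2 * √Q) * a := by ring

lemma mul_sq_le_of_mul_le_sqrt {Λ κ c H : ℝ} (hC : 1 ≤ C) (hΛ : 0 ≤ Λ) (hΛC : Λ * κ ≤ C * c)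
    (ha : 0 ≤ a) (hQ : 0 ≤ Q) (haQ : C * a ≤ √Q) (hQH : Q ≤ κ * H ^ 2) :
    Λ * a ^ 2 ≤ c * H ^ 2 := by
  have hC0 : 0 < C := one_pos.trans_le hC
  have haκ : (C * a) ^ 2 ≤ κ * H ^ 2 :=
    ((Real.le_sqrt (by positivity) hQ).1 haQ).trans hQH
  refine le_of_mul_le_mul_left ?_ hC0
  calc C * (Λ * a ^ 2) ≤ C ^ 2 * (Λ * a ^ 2) := by
        gcongr; exact le_self_pow₀ hC two_ne_zero
    _ = Λ * (C * a) ^ 2 := by ring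
    _ ≤ Λ * (κ * H ^ 2) := by gcongr
    _ = Λ * κ * H ^ 2 := by ring
    _ ≤ C * c * H ^ 2 := by gcongr
    _ = C * (c * H ^ 2) := by ring

lemma le_neg_mul_of_le_neg_mul_sqrt_add {δ ε Λ H W μ : ℝ} (hδ : 0 ≤ δ) (hε : 0 ≤ ε) (hH : 0 < H)
    (hW : δ * H ^ 2 ≤ W) (ha : Λ * a ^ 2 ≤ ε * √δ / 2 * H ^ 2)
    (hμ : μ ≤ -ε * √W + Λ * (a ^ 2 / H)) : μ ≤ -(ε * √δ / 2 * H) := by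
  have hw : √δ * H ≤ √W := by
    rw [← Real.sqrt_sq hH.le, ← Real.sqrt_mul hδ]
    exact Real.sqrt_le_sqrt hW
  have hεw : ε * (√δ * H) ≤ ε * √W := by gcongr
  have hv : Λ * (a ^ 2 / H) ≤ ε * √δ / 2 * H := by
    rw [← mul_div_assoc, div_le_iff₀ hH]
    linarith
  linarith

end ScalarEstimates

lemma trace_pow_eq_sum_eigenvalues_pow {𝕜 n : Type*} [RCLike 𝕜] [Fintype n] [DecidableEq n]
    {A : Matrix n n 𝕜} (hA : A.IsHermitian) (k : ℕ) :
    (A ^ k).trace = ∑ i, (hA.eigenvalues i : 𝕜) ^ k := by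
  conv_lhs => rw [hA.spectral_theorem, ← map_pow, Unitary.conjStarAlgAut_apply,
    Matrix.trace_mul_comm, ← mul_assoc]
  simp [Matrix.diagonal_pow, Matrix.trace_diagonal]

theorem poincare_pointwise_inequality_general {ι : Type*} [Fintype ι] (κ : ℝ) {ε₀ ε Λ : ℝ}
    (hε₀ : 0 < ε₀) (hε : 0 < ε) (hΛ : 0 ≤ Λ) :
    ∃ C : ℝ, 0 < C ∧ ∀ (x : ι → ℝ) (i : ι) (aHat : ℝ), 0 ≤ aHat → 0 < ∑ i, x i →
      (∑ i, x i ^ 2) + aHat ^ 2 ≤ (κ - ε₀) * (∑ i, x i) ^ 2 →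
      x i < -ε * √((κ - ε₀ / 2) * (∑ i, x i) ^ 2 - ((∑ i, x i ^ 2) + aHat ^ 2))
        + Λ * (aHat ^ 2 / ∑ i, x i) →
      (∑ i, x i ^ 2) * (∑ i, x i ^ 4) - (∑ i, x i ^ 3) ^ 2 ≥
        C⁻¹ * (∑ i, x i ^ 2) * ((∑ i, x i ^ 2) + aHat ^ 2) ^ 2
          - C * (((∑ i, x i ^ 2) + aHat ^ 2) ^ 2 * √((∑ i, x i ^ 2) + aHat ^ 2)) * aHat := by
  set c : ℝ := ε * √(ε₀ / 2) / 2
  have hc : 0 < c := by positivity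
  -- The second bound gives `Λ v ≤ c H` once `C â ≤ |A|`; the third gives `C⁻¹ |A|⁶ ≤ c² H⁶ / n⁴`.
  obtain ⟨C, hC⟩ : ∃ C : ℝ, 1 ≤ C ∧ Λ * κ / c ≤ C ∧
      κ ^ 3 * (Fintype.card ι : ℝ) ^ 4 / c ^ 2 ≤ C :=
    ⟨max 1 (max _ _), le_max_left .., (le_max_left ..).trans (le_max_right ..),
      (le_max_right ..).trans (le_max_right ..)⟩
  rw [div_le_iff₀ hc, div_le_iff₀ (by positivity)] at hC
  obtain ⟨hC1, hΛC, hκC⟩ := hC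
  have hC0 : 0 < C := one_pos.trans_le hC1
  refine ⟨C, hC0, fun x i a ha hH hpinch hxi ↦ ?_⟩
  have hQ : 0 ≤ (∑ i, x i ^ 2) + a ^ 2 := by positivity
  have hSQ : ∑ i, x i ^ 2 ≤ (∑ i, x i ^ 2) + a ^ 2 := le_add_of_nonneg_right (sq_nonneg a)
  set Q := (∑ i, x i ^ 2) + a ^ 2
  obtain hlarge | hsmall := le_total √Q (C * a)
  · have hdefect := (sq_nonneg _).trans (sq_mul_sub_le_sum_pow_sub x (mem_univ i) (mem_univ i))
    have habsorb := inv_mul_mul_sq_le_of_sqrt_le_mul hC1 hQ hSQ hlarge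
    linarith
  · have hε₀H : 0 < ε₀ * (∑ i, x i) ^ 2 := by positivity
    have hQH : Q ≤ κ * (∑ i, x i) ^ 2 := by linarith
    have hneg : x i ≤ -(c * ∑ i, x i) :=
      le_neg_mul_of_le_neg_mul_sqrt_add (by positivity) hε.le hH (by linarith)
        (mul_sq_le_of_mul_le_sqrt hC1 hΛ hΛC ha hQ hsmall hQH) hxi.le
    have hmain := inv_mul_sum_sq_mul_sq_le_of_le_neg_mul_sum (mem_univ i) hc.le hC0 hκC hH.le hneg
      hSQ hQH
    have herror : 0 ≤ C * (Q ^ 2 * √Q) * a := by positivity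
    linarith

/-- Pointwise algebraic inequality from the proof of the Poincaré-type proposition:
for a real symmetric matrix `h` with ordered eigenvalues `λ_1 ≤ … ≤ λ_n`,
`H = Σ λ_i > 0`, `aHat ≥ 0`, `|A|² = |h|² + aHat²` with the quadratic pinching
`|A|² ≤ (4/(3n) − ε₀) H²` and `λ_1 < −ε·w + Λ·v` where
`w = ((4/(3n) − ε₀/2)H² − |A|²)^{1/2}` and `v = aHat²/H`, one has
`tr(h²)·tr(h⁴) − tr(h³)² ≥ C⁻¹·|h|²·|A|⁴ − C·|A|⁵·aHat`. -/
theorem poincare_pointwise_inequality (n : ℕ) (hn : 2 ≤ n) (ε₀ ε Λ : ℝ)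
    (hε₀ : 0 < ε₀) (hε : 0 < ε) (hΛ : 0 < Λ) (hε₀' : ε₀ < 4 / (3 * (n : ℝ))) :
    ∃ C : ℝ, 0 < C ∧
      ∀ (h : Matrix (Fin n) (Fin n) ℝ) (hh : h.IsHermitian) (lam : Fin n → ℝ),
        Monotone lam →
        (∃ σ : Equiv.Perm (Fin n), lam = hh.eigenvalues ∘ σ) →
        ∀ aHat : ℝ, 0 ≤ aHat →
        0 < ∑ i, lam i →
        (h ^ 2).trace + aHat ^ 2 ≤ (4 / (3 * (n : ℝ)) - ε₀) * (∑ i, lam i) ^ 2 →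
        lam ⟨0, by omega⟩ <
          -ε * Real.sqrt ((4 / (3 * (n : ℝ)) - ε₀ / 2) * (∑ i, lam i) ^ 2
              - ((h ^ 2).trace + aHat ^ 2))
            + Λ * (aHat ^ 2 / (∑ i, lam i)) →
        (h ^ 2).trace * (h ^ 4).trace - ((h ^ 3).trace) ^ 2 ≥
          C⁻¹ * (h ^ 2).trace * ((h ^ 2).trace + aHat ^ 2) ^ 2
            - C * (((h ^ 2).trace + aHat ^ 2) ^ 2
                * Real.sqrt ((h ^ 2).trace + aHat ^ 2)) * aHat := by
  obtain ⟨C, hC, hbound⟩ :=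
    poincare_pointwise_inequality_general (ι := Fin n) (4 / (3 * n)) hε₀ hε hΛ.le
  refine ⟨C, hC, fun h hh lam _ ⟨σ, hσ⟩ ↦ ?_⟩
  have htrace (k : ℕ) : (h ^ k).trace = ∑ i, lam i ^ k := by
    rw [trace_pow_eq_sum_eigenvalues_pow hh, hσ]
    exact (Equiv.sum_comp σ fun i ↦ hh.eigenvalues i ^ k).symm
  simpa only [htrace] using hbound lam ⟨0, by omega⟩
end

section
/- Let X be a nonempty compact topological space, T > 0, and f : X × [0,T) → ℝ a continuous nonnegative function. Assume the type II condition: for every K > 0 there exist y ∈ X and τ ∈ [0,T) with (T−τ)·f(y,τ) ≥ K. Let (t̃_j) be a sequence in (0,T) with t̃_j → T, and for each j let (x_j, t_j) ∈ X × [0, t̃_j] be a point at which the function (x,t) ↦ (t̃_j − t)·f(x,t) attains its maximum over X × [0, t̃_j]. Then (t̃_j − t_j)·f(x_j, t_j) → ∞ and t_j → T as j → ∞. -/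
/-!
A type II point `(y, τ)` with `(T - τ) * f y τ` large competes in the maximization as soon as
`τ < tt j`, and `(tt j - τ) * f y τ` tends to `(T - τ) * f y τ`; hence the maxima diverge. The
factors `tt j - t j` stay bounded, so `f (x j) (t j)` itself blows up, and since `f` is bounded
on `X × [0, a]` for every `a < T`, the times `t j` must eventually exceed `a`.
-/

open Filter

theorem tendsto_atTop_of_mul_of_le_const {ι 𝕜 : Type*} [Semiring 𝕜] [LinearOrder 𝕜]
    [IsStrictOrderedRing 𝕜] {l : Filter ι} {u v : ι → 𝕜} {B : 𝕜}
    (huv : Tendsto (fun i => u i * v i) l atTop) (hu₀ : ∀ᶠ i in l, 0 ≤ u i)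
    (huB : ∀ᶠ i in l, u i ≤ B) : Tendsto v l atTop := by
  refine (atTop_basis_Ioi' 0).tendsto_right_iff.2 fun K hK => ?_
  filter_upwards [huv.eventually_gt_atTop (B * K), hu₀, huB] with i hi hi₀ hiB
  refine lt_of_mul_lt_mul_left ?_ hi₀
  calc
    u i * K ≤ B * K := mul_le_mul_of_nonneg_right hiB hK.le
    _ < u i * v i := hi

theorem bddAbove_image_univ_prod_Icc {X α β : Type*} [TopologicalSpace X] [CompactSpace X]
    [TopologicalSpace α] [Preorder α] [CompactIccSpace α] [TopologicalSpace β] [LinearOrder β]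
    [ClosedIciTopology β] [Nonempty β] {g : X × α → β} {a b c : α}
    (hg : ContinuousOn g (Set.univ ×ˢ Set.Ico a c)) (hbc : b < c) :
    BddAbove (g '' (Set.univ ×ˢ Set.Icc a b)) :=
  (isCompact_univ.prod isCompact_Icc).bddAbove_image
    (hg.mono (Set.prod_mono_right (Set.Icc_subset_Ico_right hbc)))

theorem eventually_lt_of_tendsto_atTop_of_bddAbove {ι X α β : Type*} [LinearOrder α]
    [Preorder β] [NoMaxOrder β] {l : Filter ι} {g : X × α → β} {x : ι → X} {t : ι → α} {a b : α}
    (hg : BddAbove (g '' (Set.univ ×ˢ Set.Icc a b))) (hat : ∀ i, a ≤ t i)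
    (hlim : Tendsto (fun i => g (x i, t i)) l atTop) : ∀ᶠ i in l, b < t i := by
  obtain ⟨C, hC⟩ := hg
  filter_upwards [hlim.eventually_gt_atTop C] with i hi
  by_contra! htb
  exact hi.not_ge (hC (Set.mem_image_of_mem g ⟨Set.mem_univ (x i), hat i, htb⟩))

section PointSelection

variable {ι X : Type*} {l : Filter ι} {t₀ T : ℝ} {f : X → ℝ → ℝ} {tt : ι → ℝ}

theorem tendsto_atTop_of_forall_sub_mul_le {m : ι → ℝ}
    (htypeII : ∀ K > (0 : ℝ), ∃ y : X, ∃ τ ∈ Set.Ico t₀ T, K ≤ (T - τ) * f y τ)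
    (htt : Tendsto tt l (nhds T))
    (hm : ∀ i, ∀ y : X, ∀ s ∈ Set.Icc t₀ (tt i), (tt i - s) * f y s ≤ m i) :
    Tendsto m l atTop := by
  refine (atTop_basis_Ioi' 0).tendsto_right_iff.2 fun K hK => ?_
  obtain ⟨y, τ, ⟨hτ₀, hτT⟩, hKτ⟩ := htypeII (K + 1) (add_pos hK one_pos)
  have hlim : Tendsto (fun i => (tt i - τ) * f y τ) l (nhds ((T - τ) * f y τ)) :=
    (htt.sub_const τ).mul_const _
  filter_upwards [hlim.eventually_const_lt ((lt_add_one K).trans_le hKτ),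
    htt.eventually_const_lt hτT] with i hKi hτi
  exact hKi.trans_le (hm i y τ ⟨hτ₀, hτi.le⟩)

theorem tendsto_atTop_of_tendsto_sub_mul {x : ι → X} {t : ι → ℝ}
    (htt : Tendsto tt l (nhds T)) (ht : ∀ i, t i ∈ Set.Icc t₀ (tt i))
    (hlim : Tendsto (fun i => (tt i - t i) * f (x i) (t i)) l atTop) :
    Tendsto (fun i => f (x i) (t i)) l atTop := by
  refine tendsto_atTop_of_mul_of_le_const (B := T + 1 - t₀) hlim
    (.of_forall fun i => sub_nonneg.2 (ht i).2) ?_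
  filter_upwards [htt.eventually_lt_const (lt_add_one T)] with i hi
  exact sub_le_sub hi.le (ht i).1

theorem type_II_point_selection_general
    (hbdd : ∀ a < T, BddAbove ((fun p : X × ℝ => f p.1 p.2) '' (Set.univ ×ˢ Set.Icc t₀ a)))
    (htypeII : ∀ K > (0 : ℝ), ∃ y : X, ∃ τ ∈ Set.Ico t₀ T, K ≤ (T - τ) * f y τ)
    (htt : Tendsto tt l (nhds T)) {x : ι → X} {t : ι → ℝ} (ht : ∀ i, t i ∈ Set.Icc t₀ (tt i))
    (hmax : ∀ i, ∀ y : X, ∀ s ∈ Set.Icc t₀ (tt i),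
      (tt i - s) * f y s ≤ (tt i - t i) * f (x i) (t i)) :
    Tendsto (fun i => (tt i - t i) * f (x i) (t i)) l atTop ∧ Tendsto t l (nhds T) := by
  have hlim := tendsto_atTop_of_forall_sub_mul_le htypeII htt hmax
  have hf := tendsto_atTop_of_tendsto_sub_mul htt ht hlim
  refine ⟨hlim, tendsto_order.2 ⟨fun a ha => ?_, fun b hb => ?_⟩⟩
  · exact eventually_lt_of_tendsto_atTop_of_bddAbove (hbdd a ha) (fun i => (ht i).1) hf
  · exact (htt.eventually_lt_const hb).mono fun i hi => (ht i).2.trans_lt hi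

end PointSelection

/-- Point-selection for type II singularities: if `f ≥ 0` is continuous on
`X × [0,T)` (`X` compact nonempty), satisfies the type II condition
(`∀ K > 0, ∃ (y,τ), (T−τ)·f(y,τ) ≥ K`), and for a sequence `t̃_j → T` in `(0,T)`
the points `(x_j, t_j)` maximize `(x,t) ↦ (t̃_j − t)·f(x,t)` over `X × [0, t̃_j]`,
then `(t̃_j − t_j)·f(x_j,t_j) → ∞` and `t_j → T`. -/
theorem type_II_point_selection (X : Type*) [TopologicalSpace X] [CompactSpace X]
    [Nonempty X] (T : ℝ) (hT : 0 < T) (f : X → ℝ → ℝ)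
    (hcont : ContinuousOn (fun p : X × ℝ => f p.1 p.2) (Set.univ ×ˢ Set.Ico 0 T))
    (hnonneg : ∀ x : X, ∀ s ∈ Set.Ico (0 : ℝ) T, 0 ≤ f x s)
    (htypeII : ∀ K > (0 : ℝ), ∃ y : X, ∃ τ ∈ Set.Ico (0 : ℝ) T, K ≤ (T - τ) * f y τ)
    (tt : ℕ → ℝ) (htt : ∀ j, tt j ∈ Set.Ioo 0 T) (htt' : Tendsto tt atTop (nhds T))
    (x : ℕ → X) (t : ℕ → ℝ) (ht : ∀ j, t j ∈ Set.Icc 0 (tt j))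
    (hmax : ∀ j, ∀ x' : X, ∀ s ∈ Set.Icc (0 : ℝ) (tt j),
      (tt j - s) * f x' s ≤ (tt j - t j) * f (x j) (t j)) :
    Tendsto (fun j => (tt j - t j) * f (x j) (t j)) atTop atTop ∧
      Tendsto t atTop (nhds T) :=
  type_II_point_selection_general (fun _ ha => bddAbove_image_univ_prod_Icc hcont ha)
    htypeII htt' ht hmax
end
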